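/- arXiv:1609.01747 — 2 statements merged into one kernel-verified Lean document; each statement's English description precedes it below -/
import Mathlib

section
/- Let X₀ and X be finite sets and w > 0 a real weight. Define bilinear pairings ⟨f, g⟩₀ = Σ_{x ∈ X₀} f(x) g(x) on ℂ^{X₀} and ⟨f, g⟩ₙ = w · Σ_{u ∈ X} f(u) g(u) on ℂ^X. Let Q : ℂ^X → ℂ^{X₀}, 𝔔 : ℂ^{X₀} → ℂ^{X₀}, and D : ℂ^X → ℂ^X be linear maps, let Q* : ℂ^{X₀} → ℂ^X be the transpose of Q characterized by ⟨f, Qφ⟩₀ = ⟨Q* f, φ⟩ₙ for all f ∈ ℂ^{X₀} and φ ∈ ℂ^X, and let μ ∈ ℂ. Let V : ℂ^X × ℂ^X → ℂ and V' : ℂ^X × ℂ^X × ℂ^X → ℂ^X be functions satisfying the Euler identity ⟨φ_*, V'(φ, φ_*, φ)⟩ₙ = 2 V(φ_*, φ). Suppose the field φ ∈ ℂ^X satisfies the background field equation D φ = Q* 𝔔 ψ − Q* 𝔔 Q φ + μ φ − V'(φ, φ_*, φ) for given ψ_*, ψ ∈ ℂ^{X₀} and φ_* ∈ ℂ^X.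 Then the action A := ⟨ψ_* − Q φ_*, 𝔔 (ψ − Q φ)⟩₀ + ⟨φ_*, D φ⟩ₙ − μ ⟨φ_*, φ⟩ₙ + V(φ_*, φ) satisfies A = ⟨ψ_*, 𝔔 (ψ − Q φ)⟩₀ − V(φ_*, φ). -/
open scoped BigOperators

/-!
Pairing the background field equation with `φ_*` gives
`⟨φ_*, Dφ - μφ⟩ₙ = ⟨φ_*, Q* 𝔔 (ψ - Qφ)⟩ₙ - 2 V(φ_*, φ)`. By adjointness its first term is
`⟨Qφ_*, 𝔔 (ψ - Qφ)⟩₀`, which cancels the `φ_*` part of the coupling term of the action; what is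
left of the interaction is `V - 2 V = -V`.
-/

section BilinForm

open LinearMap (BilinForm IsAdjointPair)

variable {R M₀ M : Type*} [CommSemiring R] [AddCommMonoid M₀] [Module R M₀] [AddCommMonoid M]
  [Module R M]

theorem isSymm_dotProductBilin {ι : Type*} [Fintype ι] :
    BilinForm.IsSymm (dotProductBilin R R : BilinForm R (ι → R)) :=
  ⟨dotProduct_comm⟩

theorem isAdjointPair_swap_of_isSymm {B₀ : BilinForm R M₀} {B : BilinForm R M} (hB₀ : B₀.IsSymm)
    (hB : B.IsSymm) {f : M₀ → M} {g : M → M₀} (h : IsAdjointPair B₀ B f g) :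
    IsAdjointPair B B₀ g f :=
  fun x y ↦ by rw [hB₀.eq, ← h, hB.eq]

end BilinForm

section BlockSpin

open LinearMap (BilinForm IsAdjointPair)

variable {R M₀ M : Type*} [CommRing R] [AddCommGroup M₀] [AddCommGroup M] [Module R M]

/-- The block-spin action `A(ψ_*, ψ, φ_*, φ)`, with the pairings `⟨·,·⟩₀` and `⟨·,·⟩ₙ` given by
bilinear forms `B₀` and `B`. The starred fields are independent variables, written `ψs` and
`φs`. -/
def blockSpinAction [Module R M₀] (B₀ : BilinForm R M₀) (B : BilinForm R M) (Q : M → M₀)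
    (𝔔 : M₀ → M₀) (D : M → M) (μ : R) (V : M → M → R) (ψs ψ : M₀) (φs φ : M) : R :=
  B₀ (ψs - Q φs) (𝔔 (ψ - Q φ)) + B φs (D φ) - μ * B φs φ + V φs φ

/-- The background field equation for `φ`, which says that the `φ_*`-gradient of the block-spin
action vanishes when `Qstar` is the transpose of `Q` and `V' φ φs φ` is the gradient of `V · φ` at
`φs`. The paper's `Q* 𝔔 ψ - Q* 𝔔 Q φ` is written as `Q* 𝔔 (ψ - Q φ)`. -/
def IsBackgroundField (Q : M → M₀) (Qstar : M₀ → M) (𝔔 : M₀ → M₀) (D : M → M) (μ : R)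
    (V' : M → M → M → M) (ψ : M₀) (φs φ : M) : Prop :=
  D φ = Qstar (𝔔 (ψ - Q φ)) + μ • φ - V' φ φs φ

variable {B : BilinForm R M} {Q : M → M₀} {Qstar : M₀ → M} {𝔔 : M₀ → M₀} {D : M → M} {μ : R}
  {V : M → M → R} {V' : M → M → M → M} {ψs ψ : M₀} {φs φ : M}

theorem IsBackgroundField.pairing_kinetic_eq (hφ : IsBackgroundField Q Qstar 𝔔 D μ V' ψ φs φ) :
    B φs (D φ) = B φs (Qstar (𝔔 (ψ - Q φ))) + μ * B φs φ - B φs (V' φ φs φ) := by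
  rw [hφ, map_sub, map_add, map_smul, smul_eq_mul]

variable [Module R M₀] {B₀ : BilinForm R M₀}

theorem isBackgroundField_iff_of_linear {Qstar : M₀ →ₗ[R] M} {𝔔 : M₀ →ₗ[R] M₀} :
    IsBackgroundField Q Qstar 𝔔 D μ V' ψ φs φ ↔
      D φ = Qstar (𝔔 ψ) - Qstar (𝔔 (Q φ)) + μ • φ - V' φ φs φ := by
  rw [IsBackgroundField, map_sub, map_sub]

theorem stmt1_general (hQ : IsAdjointPair B B₀ Q Qstar)
    (hφ : IsBackgroundField Q Qstar 𝔔 D μ V' ψ φs φ)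
    (hEuler : B φs (V' φ φs φ) = 2 * V φs φ) :
    blockSpinAction B₀ B Q 𝔔 D μ V ψs ψ φs φ = B₀ ψs (𝔔 (ψ - Q φ)) - V φs φ := by
  have coupling : B₀ (ψs - Q φs) (𝔔 (ψ - Q φ)) =
      B₀ ψs (𝔔 (ψ - Q φ)) - B φs (Qstar (𝔔 (ψ - Q φ))) := by
    rw [LinearMap.map_sub₂, hQ]
  have kinetic : B φs (D φ) =
      B φs (Qstar (𝔔 (ψ - Q φ))) + μ * B φs φ - 2 * V φs φ := by
    rw [hφ.pairing_kinetic_eq, hEuler]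
  rw [blockSpinAction, coupling, kinetic]
  ring

end BlockSpin

/-- **Simplification of the block-spin action at a background field.**
With bilinear pairings `⟨f,g⟩₀ = ∑_{x∈X₀} f x * g x` and `⟨f,g⟩ₙ = w ∑_{u∈X} f u * g u`,
a transpose `Q*` of `Q` characterized by `⟨f, Qφ⟩₀ = ⟨Q* f, φ⟩ₙ`, a quartic interaction `V`
with gradient `V'` satisfying the Euler identity `⟨φ_*, V'(φ,φ_*,φ)⟩ₙ = 2 V(φ_*,φ)`, and `φ`
solving the background field equation `D φ = Q* 𝔔 ψ − Q* 𝔔 Q φ + μ φ − V'(φ,φ_*,φ)`, the action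
`A = ⟨ψ_* − Qφ_*, 𝔔(ψ − Qφ)⟩₀ + ⟨φ_*, Dφ⟩ₙ − μ ⟨φ_*, φ⟩ₙ + V(φ_*,φ)`
equals `⟨ψ_*, 𝔔(ψ − Qφ)⟩₀ − V(φ_*,φ)`. -/
theorem stmt1 {X₀ X : Type*} [Fintype X₀] [Fintype X] (w : ℝ) (hw : 0 < w)
    (Q : (X → ℂ) →ₗ[ℂ] (X₀ → ℂ)) (𝔔 : (X₀ → ℂ) →ₗ[ℂ] (X₀ → ℂ))
    (D : (X → ℂ) →ₗ[ℂ] (X → ℂ)) (Qstar : (X₀ → ℂ) →ₗ[ℂ] (X → ℂ)) (μ : ℂ)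
    (pair₀ : (X₀ → ℂ) → (X₀ → ℂ) → ℂ) (pairₙ : (X → ℂ) → (X → ℂ) → ℂ)
    (hpair₀ : ∀ f g, pair₀ f g = ∑ x : X₀, f x * g x)
    (hpairₙ : ∀ f g, pairₙ f g = (w : ℂ) * ∑ u : X, f u * g u)
    (hQstar : ∀ (f : X₀ → ℂ) (φ : X → ℂ), pair₀ f (Q φ) = pairₙ (Qstar f) φ)
    (V : (X → ℂ) → (X → ℂ) → ℂ) (V' : (X → ℂ) → (X → ℂ) → (X → ℂ) → (X → ℂ))
    (hEuler : ∀ φs φ : X → ℂ, pairₙ φs (V' φ φs φ) = 2 * V φs φ)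
    (ψs ψ : X₀ → ℂ) (φs φ : X → ℂ)
    (hbg : D φ = Qstar (𝔔 ψ) - Qstar (𝔔 (Q φ)) + μ • φ - V' φ φs φ) :
    pair₀ (ψs - Q φs) (𝔔 (ψ - Q φ)) + pairₙ φs (D φ) - μ * pairₙ φs φ + V φs φ
      = pair₀ ψs (𝔔 (ψ - Q φ)) - V φs φ := by
  obtain rfl : pair₀ = (dotProductBilin ℂ ℂ · ·) := funext₂ hpair₀
  obtain rfl : pairₙ = (((w : ℂ) • dotProductBilin ℂ ℂ) · ·) := funext₂ hpairₙ
  exact stmt1_general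
    (isAdjointPair_swap_of_isSymm isSymm_dotProductBilin (isSymm_dotProductBilin.smul (w : ℂ))
      fun f χ ↦ (hQstar f χ).symm)
    (isBackgroundField_iff_of_linear.2 hbg) (hEuler φs φ)
end

section
/- Let X be a finite set, D an invertible X × X complex matrix, ρ ∈ ℂ^X, and c > 0 such that Re (η̄ᵀ D⁻² η) ≥ c ‖η‖² for all η ∈ ℂ^X, where ‖·‖ is the Euclidean norm and η̄ the entrywise conjugate. Let t ∈ [0,1] and suppose ζ, ζ_* ∈ ℂ^X satisfy the constraint D ζ = D† ζ̄_* + t ρ, where D† is the conjugate transpose of D. Then Re Σ_{x ∈ X} ζ_*(x) ζ(x) ≥ (c / ‖D⁻¹‖²) ‖ζ‖² − ‖(Dᵀ)⁻¹‖ ‖ρ‖ ‖ζ‖, where ‖·‖ on matrices denotes the operator norm induced by the Euclidean norm. In particular, if ‖ζ‖ ≥ (2 ‖D⁻¹‖² ‖(Dᵀ)⁻¹‖ / c) ‖ρ‖, then Re Σ_{x ∈ X} ζ_*(x) ζ(x) ≥ (c / (2 ‖D⁻¹‖²)) ‖ζ‖². -/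
open scoped BigOperators Matrix

/-- The Euclidean (`ℓ²`) norm of a vector in `ℂ^X`. -/
noncomputable def eucNorm {X : Type*} [Fintype X] (v : X → ℂ) : ℝ :=
  ‖(WithLp.equiv 2 (X → ℂ)).symm v‖

/-- The operator norm of a complex matrix, induced by the Euclidean norm on `ℂ^X`. -/
noncomputable def matOpNorm {X : Type*} [Fintype X] [DecidableEq X] (M : Matrix X X ℂ) : ℝ :=
  ‖Matrix.toEuclideanCLM (𝕜 := ℂ) M‖

/-!
With `σ = D ζ - D† ω`, moving `D†` across the inner product gives
`⟪D ζ, D⁻¹ ζ⟫ = ⟪ω, ζ⟫ + ⟪σ, D⁻¹ ζ⟫`. Coercivity of `D⁻²` at `η = D ζ` bounds the left-hand side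
below by `c ‖D ζ‖² ≥ (c / ‖D⁻¹‖²) ‖ζ‖²`, and the last term is at most `‖D⁻¹‖ ‖σ‖ ‖ζ‖`.
For the Stokes cylinder `ω` is the conjugate of `ζ_*` and `σ = t ρ`.
-/

lemma half_mul_sq_le_mul_sq_sub_mul {R : Type*} [Field R] [LinearOrder R] [IsStrictOrderedRing R]
    {a b z : R} (hz : 0 ≤ z) (h : 2 * b ≤ a * z) :
    a / 2 * z ^ 2 ≤ a * z ^ 2 - b * z := by
  linarith [mul_le_mul_of_nonneg_right h hz, sq z]

section Hilbert

open ContinuousLinearMap (adjoint)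
open scoped InnerProductSpace

variable {𝕜 E F H : Type*} [RCLike 𝕜]

lemma norm_apply_div_opNorm_le [SeminormedAddCommGroup E] [NormedSpace 𝕜 E]
    [SeminormedAddCommGroup F] [NormedSpace 𝕜 F] (B : E →L[𝕜] F) (x : E) :
    ‖B x‖ / ‖B‖ ≤ ‖x‖ :=
  div_le_of_le_mul₀ (norm_nonneg B) (norm_nonneg x) (mul_comm ‖B‖ ‖x‖ ▸ B.le_opNorm x)

lemma re_inner_apply_le_opNorm_mul [SeminormedAddCommGroup E] [NormedSpace 𝕜 E]
    [SeminormedAddCommGroup F] [InnerProductSpace 𝕜 F] (B : E →L[𝕜] F) {σ : F} {r : ℝ}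
    (hσ : ‖σ‖ ≤ r) (ζ : E) :
    RCLike.re ⟪σ, B ζ⟫_𝕜 ≤ ‖B‖ * r * ‖ζ‖ :=
  calc RCLike.re ⟪σ, B ζ⟫_𝕜 ≤ ‖σ‖ * ‖B ζ‖ := re_inner_le_norm σ (B ζ)
    _ ≤ r * (‖B‖ * ‖ζ‖) :=
      mul_le_mul hσ (B.le_opNorm ζ) (norm_nonneg _) ((norm_nonneg σ).trans hσ)
    _ = ‖B‖ * r * ‖ζ‖ := by ring

lemma inner_eq_inner_apply_add_inner_sub_adjoint
    [NormedAddCommGroup E] [InnerProductSpace 𝕜 E] [CompleteSpace E]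
    [NormedAddCommGroup F] [InnerProductSpace 𝕜 F] [CompleteSpace F]
    (D : E →L[𝕜] F) (v y : E) (ω : F) :
    ⟪v, y⟫_𝕜 = ⟪ω, D y⟫_𝕜 + ⟪v - adjoint D ω, y⟫_𝕜 := by
  rw [inner_sub_left, ContinuousLinearMap.adjoint_inner_left, add_sub_cancel]

variable [NormedAddCommGroup H] [InnerProductSpace 𝕜 H] [CompleteSpace H]

lemma coercive_sub_le_re_inner (D : (H →L[𝕜] H)ˣ) {c r : ℝ} (hc : 0 ≤ c) {ζ ω : H}
    (hcoer : c * ‖D.val ζ‖ ^ 2 ≤ RCLike.re ⟪D.val ζ, D⁻¹.val ζ⟫_𝕜)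
    (hr : ‖D.val ζ - adjoint D.val ω‖ ≤ r) :
    c / ‖D⁻¹.val‖ ^ 2 * ‖ζ‖ ^ 2 - ‖D⁻¹.val‖ * r * ‖ζ‖ ≤ RCLike.re ⟪ω, ζ⟫_𝕜 := by
  have hinv_left : D⁻¹.val (D.val ζ) = ζ := DFunLike.congr_fun D.inv_mul ζ
  have hinv_right : D.val (D⁻¹.val ζ) = ζ := DFunLike.congr_fun D.mul_inv ζ
  have hlower : c / ‖D⁻¹.val‖ ^ 2 * ‖ζ‖ ^ 2 ≤ c * ‖D.val ζ‖ ^ 2 :=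
    calc c / ‖D⁻¹.val‖ ^ 2 * ‖ζ‖ ^ 2
        = c * (‖D⁻¹.val (D.val ζ)‖ / ‖D⁻¹.val‖) ^ 2 := by rw [hinv_left]; ring
      _ ≤ c * ‖D.val ζ‖ ^ 2 := by gcongr; exact norm_apply_div_opNorm_le _ _
  have hsplit : RCLike.re ⟪D.val ζ, D⁻¹.val ζ⟫_𝕜 =
      RCLike.re ⟪ω, ζ⟫_𝕜 + RCLike.re ⟪D.val ζ - adjoint D.val ω, D⁻¹.val ζ⟫_𝕜 := by
    rw [inner_eq_inner_apply_add_inner_sub_adjoint D.val _ _ ω, hinv_right, map_add]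
  linarith [re_inner_apply_le_opNorm_mul D⁻¹.val hr ζ]

theorem stmt5_general (D : (H →L[𝕜] H)ˣ) {c r : ℝ} (hc : 0 < c)
    (hcoer : ∀ η : H, c * ‖η‖ ^ 2 ≤ RCLike.re ⟪η, D⁻¹.val (D⁻¹.val η)⟫_𝕜) {ζ ω : H}
    (hr : ‖D.val ζ - adjoint D.val ω‖ ≤ r) :
    c / ‖D⁻¹.val‖ ^ 2 * ‖ζ‖ ^ 2 - ‖D⁻¹.val‖ * r * ‖ζ‖ ≤ RCLike.re ⟪ω, ζ⟫_𝕜 ∧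
      (2 * ‖D⁻¹.val‖ ^ 2 * ‖D⁻¹.val‖ / c * r ≤ ‖ζ‖ →
        c / (2 * ‖D⁻¹.val‖ ^ 2) * ‖ζ‖ ^ 2 ≤ RCLike.re ⟪ω, ζ⟫_𝕜) := by
  have hinv : D⁻¹.val (D.val ζ) = ζ := DFunLike.congr_fun D.inv_mul ζ
  have hbound := coercive_sub_le_re_inner D hc.le (by simpa only [hinv] using hcoer (D.val ζ)) hr
  refine ⟨hbound, fun hlarge => ?_⟩
  have habsorb : 2 * (‖D⁻¹.val‖ * r) ≤ c / ‖D⁻¹.val‖ ^ 2 * ‖ζ‖ := by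
    obtain hzero | hpos := (norm_nonneg D⁻¹.val).eq_or_lt
    · simp [← hzero]
    · calc 2 * (‖D⁻¹.val‖ * r)
          = c / ‖D⁻¹.val‖ ^ 2 * (2 * ‖D⁻¹.val‖ ^ 2 * ‖D⁻¹.val‖ / c * r) := by field_simp
        _ ≤ c / ‖D⁻¹.val‖ ^ 2 * ‖ζ‖ := by gcongr
  rw [mul_comm 2, ← div_div]
  exact (half_mul_sq_le_mul_sq_sub_mul (norm_nonneg ζ) habsorb).trans hbound

end Hilbert

section Matrix

variable {𝕜 X : Type*} [RCLike 𝕜] [Fintype X]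

lemma eucNorm_star (v : X → ℂ) : eucNorm (star v) = eucNorm v := by
  simp [eucNorm, EuclideanSpace.norm_eq]

lemma eucNorm_smul_le {t : ℂ} (ht : ‖t‖ ≤ 1) (v : X → ℂ) : eucNorm (t • v) ≤ eucNorm v := by
  rw [eucNorm, WithLp.equiv_symm_apply, WithLp.toLp_smul, norm_smul]
  exact mul_le_of_le_one_left (norm_nonneg _) ht

lemma sum_mul_eq_inner_toLp_star (v w : X → 𝕜) :
    ∑ x, v x * w x = inner 𝕜 (WithLp.toLp 2 (star v)) (WithLp.toLp 2 w) := by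
  rw [EuclideanSpace.inner_toLp_toLp, star_star, dotProduct_comm, dotProduct]

variable [DecidableEq X]

lemma inner_toLp_toEuclideanCLM (M : Matrix X X 𝕜) (v w : X → 𝕜) :
    inner 𝕜 (WithLp.toLp 2 v) (Matrix.toEuclideanCLM (𝕜 := 𝕜) M (WithLp.toLp 2 w)) =
      star v ⬝ᵥ (M *ᵥ w) := by
  rw [Matrix.toEuclideanCLM_toLp, EuclideanSpace.inner_toLp_toLp, dotProduct_comm]

lemma toEuclideanCLM_conjTranspose (M : Matrix X X 𝕜) :
    Matrix.toEuclideanCLM (𝕜 := 𝕜) Mᴴ =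
      ContinuousLinearMap.adjoint (Matrix.toEuclideanCLM (𝕜 := 𝕜) M) :=
  map_star (Matrix.toEuclideanCLM (𝕜 := 𝕜)) M

lemma matOpNorm_conjTranspose (M : Matrix X X ℂ) : matOpNorm Mᴴ = matOpNorm M := by
  rw [matOpNorm, toEuclideanCLM_conjTranspose, LinearIsometryEquiv.norm_map, matOpNorm]

lemma eucNorm_mulVec_le (M : Matrix X X ℂ) (v : X → ℂ) :
    eucNorm (M *ᵥ v) ≤ matOpNorm M * eucNorm v :=
  (Matrix.toEuclideanCLM (𝕜 := ℂ) M).le_opNorm (WithLp.toLp 2 v)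

lemma matOpNorm_transpose_le (M : Matrix X X ℂ) : matOpNorm Mᵀ ≤ matOpNorm M := by
  refine ContinuousLinearMap.opNorm_le_bound _ (norm_nonneg _) fun v => ?_
  have hconj : Mᵀ *ᵥ v.ofLp = star (Mᴴ *ᵥ star v.ofLp) := by
    rw [Matrix.star_mulVec, star_star, Matrix.conjTranspose_conjTranspose, Matrix.mulVec_transpose]
  calc eucNorm (Mᵀ *ᵥ v.ofLp) = eucNorm (Mᴴ *ᵥ star v.ofLp) := by rw [hconj, eucNorm_star]
    _ ≤ matOpNorm Mᴴ * eucNorm (star v.ofLp) := eucNorm_mulVec_le _ _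
    _ = matOpNorm M * eucNorm v.ofLp := by rw [matOpNorm_conjTranspose, eucNorm_star]

lemma matOpNorm_transpose (M : Matrix X X ℂ) : matOpNorm Mᵀ = matOpNorm M :=
  (matOpNorm_transpose_le M).antisymm (matOpNorm_transpose_le Mᵀ)

/-- The invertible operator on Euclidean space defined by a matrix with invertible determinant; its
inverse is by construction the operator of the matrix inverse `D⁻¹`. -/
noncomputable def euclideanUnit (D : Matrix X X 𝕜) (hD : IsUnit D.det) :
    (EuclideanSpace 𝕜 X →L[𝕜] EuclideanSpace 𝕜 X)ˣ where
  val := Matrix.toEuclideanCLM (𝕜 := 𝕜) D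
  inv := Matrix.toEuclideanCLM (𝕜 := 𝕜) D⁻¹
  val_inv := by rw [← map_mul, Matrix.mul_nonsing_inv D hD, map_one]
  inv_val := by rw [← map_mul, Matrix.nonsing_inv_mul D hD, map_one]

lemma inner_euclideanUnit_inv_inv (D : Matrix X X 𝕜) (hD : IsUnit D.det)
    (η : EuclideanSpace 𝕜 X) :
    inner 𝕜 η ((euclideanUnit D hD)⁻¹.val ((euclideanUnit D hD)⁻¹.val η)) =
      star η.ofLp ⬝ᵥ ((D⁻¹ * D⁻¹) *ᵥ η.ofLp) := by
  rw [← Matrix.mulVec_mulVec]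
  exact inner_toLp_toEuclideanCLM D⁻¹ η.ofLp (D⁻¹ *ᵥ η.ofLp)

lemma norm_euclideanUnit_sub_adjoint_le {D : Matrix X X ℂ} (hD : IsUnit D.det) {t : ℂ}
    (ht : ‖t‖ ≤ 1) {ζ ω ρ : X → ℂ} (hcon : D *ᵥ ζ = Dᴴ *ᵥ ω + t • ρ) :
    ‖(euclideanUnit D hD).val (WithLp.toLp 2 ζ) -
        ContinuousLinearMap.adjoint (euclideanUnit D hD).val (WithLp.toLp 2 ω)‖ ≤ eucNorm ρ :=
  calc ‖(euclideanUnit D hD).val (WithLp.toLp 2 ζ) -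
        ContinuousLinearMap.adjoint (euclideanUnit D hD).val (WithLp.toLp 2 ω)‖
      = eucNorm (D *ᵥ ζ - Dᴴ *ᵥ ω) := by
        rw [euclideanUnit, ← toEuclideanCLM_conjTranspose]
        rfl
    _ = eucNorm (t • ρ) := by rw [hcon, add_sub_cancel_left]
    _ ≤ eucNorm ρ := eucNorm_smul_le ht ρ

end Matrix

/-- **Coercivity of the fluctuation pairing on the Stokes cylinder.**
Let `D` be invertible with `Re (η̄ᵀ D⁻² η) ≥ c ‖η‖²`, let `t ∈ [0,1]`, and suppose
`D ζ = D† ζ̄_* + t ρ`.  Then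
`Re ∑_x ζ_*(x) ζ(x) ≥ (c/‖D⁻¹‖²) ‖ζ‖² − ‖(Dᵀ)⁻¹‖ ‖ρ‖ ‖ζ‖`; in particular, if
`‖ζ‖ ≥ (2 ‖D⁻¹‖² ‖(Dᵀ)⁻¹‖ / c) ‖ρ‖` then `Re ∑_x ζ_*(x) ζ(x) ≥ (c/(2‖D⁻¹‖²)) ‖ζ‖²`. -/
theorem stmt5 {X : Type*} [Fintype X] [DecidableEq X]
    (D : Matrix X X ℂ) (hD : IsUnit D.det) (ρ : X → ℂ) (c : ℝ) (hc : 0 < c)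
    (hcoer : ∀ η : X → ℂ, c * (eucNorm η) ^ 2 ≤ ((star η) ⬝ᵥ ((D⁻¹ * D⁻¹) *ᵥ η)).re)
    (t : ℝ) (ht : t ∈ Set.Icc (0 : ℝ) 1) (ζ ζs : X → ℂ)
    (hcon : D *ᵥ ζ = Dᴴ *ᵥ (star ζs) + (t : ℂ) • ρ) :
    (c / (matOpNorm D⁻¹) ^ 2) * (eucNorm ζ) ^ 2 - matOpNorm (Dᵀ)⁻¹ * eucNorm ρ * eucNorm ζ
        ≤ (∑ x : X, ζs x * ζ x).re ∧
      ((2 * (matOpNorm D⁻¹) ^ 2 * matOpNorm (Dᵀ)⁻¹ / c) * eucNorm ρ ≤ eucNorm ζ →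
        (c / (2 * (matOpNorm D⁻¹) ^ 2)) * (eucNorm ζ) ^ 2 ≤ (∑ x : X, ζs x * ζ x).re) := by
  rw [← Matrix.transpose_nonsing_inv, matOpNorm_transpose, sum_mul_eq_inner_toLp_star]
  exact stmt5_general (euclideanUnit D hD) hc
    (fun η => (inner_euclideanUnit_inv_inv D hD η).symm ▸ hcoer η.ofLp)
    (norm_euclideanUnit_sub_adjoint_le hD ((Complex.norm_of_nonneg ht.1).trans_le ht.2) hcon)
end
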